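/- arXiv:1809.08853 — 13 statements merged into one kernel-verified Lean document; each statement's English description precedes it below -/
import Mathlib

section
/- Let G be a finite group, n ≥ 1, and let g₁,…,gₙ and g₁′,…,gₙ′ be elements of G such that gᵢ′ is conjugate to gᵢ for every 1 ≤ i ≤ n. Then the sets 𝒟_{g₁,…,gₙ} and 𝒟_{g₁′,…,gₙ′} have the same cardinality. -/
/-- `𝒟_{g₁,…,gₙ}` : the set of tuples `(a₁,…,aₙ)` with
`g₁·a₁·g₂·a₂·⋯·gₙ·aₙ = 1` and `a₁·a₂·⋯·aₙ = 1`. -/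
def Dset {G : Type*} [Group G] {n : ℕ} (g : Fin n → G) : Set (Fin n → G) :=
  {a | (List.ofFn fun i => g i * a i).prod = 1 ∧ (List.ofFn a).prod = 1}

theorem telescope_aux {G : Type*} [Group G] : ∀ {n : ℕ} (d : Fin (n + 1) → G) (x : Fin n → G),
    (List.ofFn fun i => d i.castSucc * x i * (d i.succ)⁻¹).prod
      = d 0 * (List.ofFn x).prod * (d (Fin.last n))⁻¹ := by
  intro n
  induction n with
  | zero => intro d x; simp
  | succ n ih =>
    intro d x
    have h := ih (fun i => d i.succ) (fun i => x i.succ)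
    simp only [List.ofFn_succ, List.prod_cons]
    simp only [Fin.succ_castSucc, Fin.succ_last] at h
    simp only [← Fin.succ_castSucc] at h ⊢
    rw [h]
    simp [mul_assoc]

/-- If `gᵢ′` is conjugate to `gᵢ` for every `i`, then `𝒟_{g₁,…,gₙ}` and
`𝒟_{g₁′,…,gₙ′}` have the same cardinality. -/
theorem stmt2 {G : Type*} [Group G] [Fintype G] {n : ℕ} (hn : 1 ≤ n)
    (g g' : Fin n → G) (hconj : ∀ i : Fin n, ∃ c : G, c * g i * c⁻¹ = g' i) :
    Nat.card ↥(Dset g) = Nat.card ↥(Dset g') := by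
  obtain ⟨m, rfl⟩ : ∃ m, n = m + 1 := ⟨n - 1, by omega⟩
  choose c hc using hconj
  let d : Fin (m + 1 + 1) → G := Fin.snoc c (c 0)
  have d1 : ∀ i : Fin (m + 1), d i.castSucc = c i := fun i => by simp [d]
  have d2 : d (Fin.last (m + 1)) = d 0 := by
    have h0 := d1 0
    rw [Fin.castSucc_zero] at h0
    rw [h0]
    simp [d]
  let e : (Fin (m + 1) → G) ≃ (Fin (m + 1) → G) := Equiv.piCongrRight fun i =>
    (Equiv.mulLeft (d i.castSucc)).trans (Equiv.mulRight (d i.succ)⁻¹)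
  have he : ∀ a i, e a i = d i.castSucc * a i * (d i.succ)⁻¹ := fun a i => rfl
  refine Nat.card_congr (Equiv.subtypeEquiv e fun a => ?_)
  have h2 : (List.ofFn (e a)).prod = d 0 * (List.ofFn a).prod * (d 0)⁻¹ := by
    have := telescope_aux d a
    rw [d2] at this
    exact this
  have h1 : (List.ofFn fun i => g' i * e a i).prod
      = d 0 * (List.ofFn fun i => g i * a i).prod * (d 0)⁻¹ := by
    have := telescope_aux d (fun i => g i * a i)
    rw [d2] at this
    rw [← this]
    congr 2
    funext i
    rw [he, ← hc, d1]
    group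
  change (_ ∧ _) ↔ (_ ∧ _)
  rw [h1, h2, conj_eq_one_iff, conj_eq_one_iff]
end

section
/- Let G be a finite group, n ≥ 1, and g₁,…,gₙ ∈ G. For every permutation σ of {1,…,n}, the sets 𝒟_{g₁,…,gₙ} and 𝒟_{g_{σ(1)},…,g_{σ(n)}} have the same cardinality. -/
open Classical in
noncomputable def Pc {G : Type*} [Group G] [Fintype G] : List G → G → G → ℕ
  | [], x, y => if x = 1 ∧ y = 1 then 1 else 0
  | g :: l, x, y => ∑ a : G, Pc l ((g * a)⁻¹ * x) (a⁻¹ * y)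

noncomputable def Rc {G : Type*} [Group G] [Fintype G] (l : List G) (x : G) : ℕ :=
  ∑ y : G, Pc l (x * y) y

noncomputable def Sc {G : Type*} [Group G] [Fintype G] (l : List G) (x : G) : ℕ :=
  ∑ t : G, Rc l (t⁻¹ * x * t)

theorem Rc_cons {G : Type*} [Group G] [Fintype G] (g : G) (l : List G) (x : G) :
    Rc (g :: l) x = ∑ a : G, Rc l (a⁻¹ * g⁻¹ * x * a) := by
  simp only [Rc, Pc]
  rw [Finset.sum_comm]
  refine Finset.sum_congr rfl fun a _ => ?_
  refine Fintype.sum_equiv (Equiv.mulLeft a⁻¹) _ _ fun y => ?_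
  simp [mul_assoc]

theorem Sc_cons {G : Type*} [Group G] [Fintype G] (g : G) (l : List G) (x : G) :
    Sc (g :: l) x = ∑ t : G, Sc l (t * g⁻¹ * t⁻¹ * x) := by
  simp only [Sc, Rc_cons]
  refine Finset.sum_congr rfl fun t _ => ?_
  refine Fintype.sum_equiv (Equiv.mulLeft t) _ _ fun y => ?_
  simp [mul_assoc]

theorem Sc_perm {G : Type*} [Group G] [Fintype G] {l l' : List G} (h : l.Perm l') :
    ∀ x, Sc l x = Sc l' x := by
  induction h with
  | nil => intro x; rfl
  | cons g _ ih => intro x; simp only [Sc_cons, ih]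
  | trans _ _ ih1 ih2 => intro x; rw [ih1, ih2]
  | swap g h l =>
    intro x
    simp only [Sc_cons]
    conv_rhs => rw [Finset.sum_comm]
    refine Finset.sum_congr rfl fun b _ => ?_
    refine Fintype.sum_equiv (Equiv.mulLeft (b * h⁻¹ * b⁻¹)⁻¹) _ _ fun c => ?_
    congr 1
    simp [mul_assoc]

theorem Pc_mul {G : Type*} [Group G] [Fintype G] (z : G) (l : List G) (g : G) :
    ∀ x y, Pc (g :: l) (x * z) (y * z) = Pc (g :: l) x y := by
  induction l generalizing g with
  | nil =>
    intro x y
    simp only [Pc]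
    refine Fintype.sum_equiv (Equiv.mulRight z⁻¹) _ _ fun a => ?_
    have h : ((g * a)⁻¹ * (x * z) = 1 ∧ a⁻¹ * (y * z) = 1) =
        ((g * (a * z⁻¹))⁻¹ * x = 1 ∧ (a * z⁻¹)⁻¹ * y = 1) := by
      simp only [inv_mul_eq_one]
      simp only [← mul_assoc, mul_inv_eq_iff_eq_mul]
    simp only [Equiv.coe_mulRight]
    congr 1
  | cons h l ih =>
    intro x y
    rw [Pc, Pc]
    simp only [← mul_assoc, ih]

theorem Sc_one {G : Type*} [Group G] [Fintype G] (l : List G) (hl : l ≠ []) :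
    Sc l 1 = Fintype.card G * (Fintype.card G * Pc l 1 1) := by
  obtain ⟨g, l, rfl⟩ := List.exists_cons_of_ne_nil hl
  have h : ∀ y, Pc (g :: l) y y = Pc (g :: l) 1 1 := fun y => by
    simpa using Pc_mul y l g 1 1
  simp [Sc, Rc, h]

theorem card_Pc {G : Type*} [Group G] [Fintype G] {n : ℕ} (g : Fin n → G) :
    ∀ x y, Nat.card {a : Fin n → G // (List.ofFn fun i => g i * a i).prod = x ∧
      (List.ofFn a).prod = y} = Pc (List.ofFn g) x y := by
  classical
  induction n with
  | zero =>
    intro x y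
    simp only [List.ofFn_zero, List.prod_nil, Pc]
    by_cases h : 1 = x ∧ 1 = y
    · rw [if_pos ⟨h.1.symm, h.2.symm⟩]; simp [h.1.symm, h.2.symm]
    · rw [if_neg (fun h' => h ⟨h'.1.symm, h'.2.symm⟩)]
      have : IsEmpty {a : Fin 0 → G // 1 = x ∧ 1 = y} := ⟨fun a => h a.2⟩
      exact Nat.card_of_isEmpty
  | succ n ih =>
    intro x y
    rw [List.ofFn_succ, Pc]
    simp only [← ih]
    rw [← Nat.card_sigma]
    refine Nat.card_congr
      { toFun := fun a => ⟨a.1 0, fun i => a.1 i.succ, ?_, ?_⟩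
        invFun := fun s => ⟨Fin.cons s.1 s.2.1, ?_, ?_⟩
        left_inv := ?_
        right_inv := ?_ }
    · have := a.2.1
      rw [List.ofFn_succ, List.prod_cons] at this
      exact eq_inv_mul_of_mul_eq this
    · have := a.2.2
      rw [List.ofFn_succ, List.prod_cons] at this
      exact eq_inv_mul_of_mul_eq this
    · rw [List.ofFn_succ, List.prod_cons]
      simp only [Fin.cons_zero, Fin.cons_succ]
      rw [s.2.2.1, mul_inv_cancel_left]
    · rw [List.ofFn_succ, List.prod_cons]
      simp only [Fin.cons_zero, Fin.cons_succ]
      rw [s.2.2.2, mul_inv_cancel_left]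
    · intro a
      apply Subtype.ext
      exact Fin.cons_self_tail a.1
    · intro s
      rfl

/-- For every permutation `σ` of `{1,…,n}`, the sets `𝒟_{g₁,…,gₙ}` and
`𝒟_{g_{σ(1)},…,g_{σ(n)}}` have the same cardinality. -/
theorem stmt3 {G : Type*} [Group G] [Fintype G] {n : ℕ} (hn : 1 ≤ n)
    (g : Fin n → G) (σ : Equiv.Perm (Fin n)) :
    Nat.card ↥(Dset g) = Nat.card ↥(Dset (fun i => g (σ i))) := by
  have hne : ∀ f : Fin n → G, List.ofFn f ≠ [] := fun f h => by
    rw [List.ofFn_eq_nil_iff] at h; omega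
  have hp : (List.ofFn (fun i => g (σ i))).Perm (List.ofFn g) :=
    Equiv.Perm.ofFn_comp_perm σ g
  have h := Sc_perm hp 1
  rw [Sc_one _ (hne _), Sc_one _ (hne _)] at h
  have hc : 0 < Fintype.card G := Fintype.card_pos
  have h2 := Nat.eq_of_mul_eq_mul_left hc (Nat.eq_of_mul_eq_mul_left hc h)
  rw [← card_Pc, ← card_Pc] at h2
  exact h2.symm
end

section
/- Let G be a finite group and g, h, k ∈ G. Then the cardinality of 𝒟_{g,h,k⁻¹} equals |C_G(k)| multiplied by the number of elements x ∈ G such that g·x·h·x⁻¹ is conjugate to k. -/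
/-- `|𝒟_{g,h,k⁻¹}| = |C_G(k)| · #{x ∈ G : g·x·h·x⁻¹ is conjugate to k}`. -/
theorem stmt5 {G : Type*} [Group G] [Fintype G] (g h k : G) :
    Nat.card ↥(Dset ![g, h, k⁻¹]) =
      Nat.card {x : G // x * k = k * x} *
        Nat.card {x : G // ∃ c : G, c * (g * x * h * x⁻¹) * c⁻¹ = k} := by
  classical
  have key : ∀ a : Fin 3 → G, a ∈ Dset ![g, h, k⁻¹] ↔
      a 2 * (g * a 0 * h * (a 0)⁻¹) * (a 2)⁻¹ = k ∧ a 1 = (a 0)⁻¹ * (a 2)⁻¹ := by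
    intro a
    simp only [Dset, Set.mem_setOf_eq, List.ofFn_succ, List.ofFn_zero, List.prod_cons,
      List.prod_nil, mul_one]
    change (g * a 0 * (h * a 1 * (k⁻¹ * a 2)) = 1 ∧ a 0 * (a 1 * a 2) = 1) ↔ _
    have h2 : a 0 * (a 1 * a 2) = 1 ↔ a 1 = (a 0)⁻¹ * (a 2)⁻¹ := by
      rw [eq_mul_inv_iff_mul_eq, eq_inv_iff_mul_eq_one, mul_eq_one_iff_eq_inv,
        mul_eq_one_iff_eq_inv]
      constructor
      · intro e; rw [e]; simp
      · intro e; rw [e]; simp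
    rw [h2]
    constructor
    · rintro ⟨h1, e⟩
      refine ⟨?_, e⟩
      rw [e] at h1
      have h3 : a 2 * (g * a 0 * (h * ((a 0)⁻¹ * (a 2)⁻¹) * (k⁻¹ * a 2))) * (a 2)⁻¹ = 1 := by
        rw [h1]; simp
      rw [← mul_inv_eq_one, ← h3]
      group
    · rintro ⟨h1, e⟩
      refine ⟨?_, e⟩
      rw [e]
      generalize a 2 = c at *
      generalize a 0 = x at *
      subst h1
      group
  rw [← Nat.card_prod]
  let X := {x : G // ∃ c : G, c * (g * x * h * x⁻¹) * c⁻¹ = k}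
  choose c hc using fun x : X => x.2
  refine Nat.card_congr (Equiv.symm (Equiv.ofBijective (fun p : {x : G // x * k = k * x} × X =>
    (⟨![p.2.1, (p.2.1)⁻¹ * (p.1.1 * c p.2)⁻¹, p.1.1 * c p.2], ?_⟩ :
      ↥(Dset ![g, h, k⁻¹]))) ⟨?_, ?_⟩))
  · rw [key]
    refine ⟨?_, rfl⟩
    change p.1.1 * c p.2 * (g * p.2.1 * h * (p.2.1)⁻¹) * (p.1.1 * c p.2)⁻¹ = k
    have e1 := hc p.2
    have e2 := p.1.2
    calc _ = p.1.1 * (c p.2 * (g * p.2.1 * h * (p.2.1)⁻¹) * (c p.2)⁻¹) * (p.1.1)⁻¹ := by group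
      _ = k := by rw [e1, e2]; group
  · rintro ⟨z, x⟩ ⟨z', x'⟩ e
    have e := congrArg Subtype.val e
    have e0 : x.1 = x'.1 := congrFun e 0
    have e2 : z.1 * c x = z'.1 * c x' := congrFun e 2
    obtain rfl : x = x' := Subtype.ext e0
    rw [Subtype.ext (mul_right_cancel e2)]
  · rintro ⟨a, ha⟩
    obtain ⟨h1, h2⟩ := (key a).1 ha
    let x : X := ⟨a 0, a 2, h1⟩
    have e1 : c x * (g * a 0 * h * (a 0)⁻¹) * (c x)⁻¹ = k := hc x
    refine ⟨(⟨a 2 * (c x)⁻¹, ?_⟩, x), ?_⟩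
    · nth_rewrite 1 [← e1]
      rw [← h1]
      group
    · apply Subtype.ext
      funext i
      fin_cases i
      · rfl
      · simp [h2, x]
      · simp
end

section
/- Let G be a finite group, n ≥ 2, g₁,…,gₙ ∈ G, and let v be an index with 2 ≤ v ≤ n. Then Σ_{c ∈ G} |𝒟_{g₁,…,g_{v-1},c}| · |𝒟_{c⁻¹,g_v,…,gₙ}| = |G| · |𝒟_{g₁,…,gₙ}|, where the sum runs over all elements c of G. (This is the gluing identity B̄_{i₁,…,iₖ} = Σ_j (1/v_j) B̄_{i₁,…,i_{v-1},j} B̄_{j⋆,i_v,…,iₖ} of the paper, rewritten as a sum over group elements instead of conjugacy classes.) -/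
def pw {G : Type*} [Group G] {n : ℕ} (g a : Fin n → G) : G :=
  (List.ofFn fun i => g i * a i).prod

def pr {G : Type*} [Group G] {n : ℕ} (a : Fin n → G) : G := (List.ofFn a).prod

def mulLast {G : Type*} [Group G] {n : ℕ} (a : Fin (n + 1) → G) (t : G) : Fin (n + 1) → G :=
  Fin.snoc (Fin.init a) (a (Fin.last n) * t)

theorem mulLast_mulLast {G : Type*} [Group G] {n : ℕ} (a : Fin (n + 1) → G) (s t : G) :
    mulLast (mulLast a s) t = mulLast a (s * t) := by
  simp [mulLast, mul_assoc]

theorem mulLast_one {G : Type*} [Group G] {n : ℕ} (a : Fin (n + 1) → G) :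
    mulLast a 1 = a := by
  simp [mulLast]

theorem pr_mulLast {G : Type*} [Group G] {n : ℕ} (a : Fin (n + 1) → G) (t : G) :
    pr (mulLast a t) = pr a * t := by
  rw [pr, pr, List.ofFn_succ', List.ofFn_succ']
  simp [mulLast, Fin.init, mul_assoc, List.concat_eq_append, -List.ofFn_succ]

theorem pw_mulLast {G : Type*} [Group G] {n : ℕ} (g a : Fin (n + 1) → G) (t : G) :
    pw g (mulLast a t) = pw g a * t := by
  rw [pw, pw, List.ofFn_succ', List.ofFn_succ']
  simp [mulLast, Fin.init, mul_assoc, List.concat_eq_append, -List.ofFn_succ]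

theorem pr_snoc {G : Type*} [Group G] {n : ℕ} (a : Fin n → G) (x : G) :
    pr (Fin.snoc a x : Fin (n + 1) → G) = pr a * x := by
  rw [pr, pr, List.ofFn_succ']
  simp [List.concat_eq_append, -List.ofFn_succ]

theorem pw_snoc {G : Type*} [Group G] {n : ℕ} (g a : Fin n → G) (c x : G) :
    pw (Fin.snoc g c : Fin (n + 1) → G) (Fin.snoc a x : Fin (n + 1) → G)
      = pw g a * (c * x) := by
  rw [pw, pw, List.ofFn_succ']
  simp [List.concat_eq_append, -List.ofFn_succ]

theorem pr_cons {G : Type*} [Group G] {n : ℕ} (a : Fin n → G) (x : G) :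
    pr (Fin.cons x a : Fin (n + 1) → G) = x * pr a := by
  simp [pr, List.ofFn_succ]

theorem pw_cons {G : Type*} [Group G] {n : ℕ} (g a : Fin n → G) (c x : G) :
    pw (Fin.cons c g : Fin (n + 1) → G) (Fin.cons x a : Fin (n + 1) → G)
      = c * x * pw g a := by
  simp [pw, List.ofFn_succ]

theorem pr_append {G : Type*} [Group G] {k m : ℕ} (a : Fin k → G) (b : Fin m → G) :
    pr (Fin.append a b) = pr a * pr b := by
  simp [pr, List.ofFn_fin_append]

theorem pw_append {G : Type*} [Group G] {k m : ℕ} (g a : Fin k → G) (h b : Fin m → G) :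
    pw (Fin.append g h) (Fin.append a b) = pw g a * pw h b := by
  have : (fun i => Fin.append g h i * Fin.append a b i)
      = Fin.append (fun i => g i * a i) (fun i => h i * b i) := by
    funext i
    refine Fin.addCases (fun i => ?_) (fun i => ?_) i <;> simp
  simp [pw, this, List.ofFn_fin_append]

theorem mem_Dset {G : Type*} [Group G] {n : ℕ} (g a : Fin n → G) :
    a ∈ Dset g ↔ pw g a = 1 ∧ pr a = 1 := Iff.rfl

theorem card_snoc {G : Type*} [Group G] {k : ℕ} (g : Fin k → G) (c : G) :
    Nat.card ↥(Dset (Fin.snoc g c : Fin (k + 1) → G)) =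
      Nat.card {a : Fin k → G // (pw g a)⁻¹ * pr a = c} := by
  symm
  refine Nat.card_congr (Equiv.ofBijective
    (fun a => ⟨Fin.snoc a.1 (pr a.1)⁻¹, ?_⟩) ⟨?_, ?_⟩)
  · obtain ⟨a, rfl⟩ := a
    rw [mem_Dset, pw_snoc, pr_snoc]; constructor <;> group
  · rintro ⟨a, ha⟩ ⟨b, hb⟩ h
    have := congrArg (fun z => Fin.init z.1) h
    simpa using this
  · rintro ⟨z, hz⟩
    induction z using Fin.snocCases with
    | _ a x =>
    rw [mem_Dset, pw_snoc, pr_snoc] at hz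
    obtain ⟨h1, h2⟩ := hz
    have hx : x = (pr a)⁻¹ := (inv_eq_of_mul_eq_one_right h2).symm
    subst hx
    refine ⟨⟨a, ?_⟩, rfl⟩
    rw [← mul_assoc, mul_inv_eq_one] at h1
    rw [← h1]; group

theorem card_cons {G : Type*} [Group G] {k : ℕ} (g : Fin k → G) (c : G) :
    Nat.card ↥(Dset (Fin.cons c⁻¹ g : Fin (k + 1) → G)) =
      Nat.card {a : Fin k → G // (pr a)⁻¹ * pw g a = c} := by
  symm
  refine Nat.card_congr (Equiv.ofBijective
    (fun a => ⟨Fin.cons (pr a.1)⁻¹ a.1, ?_⟩) ⟨?_, ?_⟩)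
  · obtain ⟨a, rfl⟩ := a
    rw [mem_Dset, pw_cons, pr_cons]; constructor <;> group
  · rintro ⟨a, ha⟩ ⟨b, hb⟩ h
    have := congrArg (fun z => Fin.tail z.1) h
    simpa using this
  · rintro ⟨z, hz⟩
    induction z using Fin.consCases with
    | _ x a =>
    rw [mem_Dset, pw_cons, pr_cons] at hz
    obtain ⟨h1, h2⟩ := hz
    have hx : x = (pr a)⁻¹ := eq_inv_of_mul_eq_one_left h2
    subst hx
    refine ⟨⟨a, ?_⟩, rfl⟩
    rwa [mul_assoc, inv_mul_eq_one, eq_comm] at h1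

theorem card_append {G : Type*} [Group G] {k m : ℕ} (g : Fin k → G) (h : Fin m → G) :
    Nat.card ↥(Dset (Fin.append g h)) =
      Nat.card {p : (Fin k → G) × (Fin m → G) // pw g p.1 * pw h p.2 = 1 ∧ pr p.1 * pr p.2 = 1} := by
  symm
  refine Nat.card_congr ((Fin.appendEquiv k m).subtypeEquiv ?_)
  rintro ⟨a, b⟩
  change _ ↔ Fin.append a b ∈ _
  rw [mem_Dset, pw_append, pr_append]

theorem stmt6 {G : Type*} [Group G] [Fintype G] {k m : ℕ} (hk : 1 ≤ k) (hm : 1 ≤ m)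
    (g₁ : Fin k → G) (g₂ : Fin m → G) :
    ∑ c : G, Nat.card ↥(Dset (Fin.snoc g₁ c)) * Nat.card ↥(Dset (Fin.cons c⁻¹ g₂)) =
      Fintype.card G * Nat.card ↥(Dset (Fin.append g₁ g₂)) := by
  obtain ⟨k, rfl⟩ := Nat.exists_eq_add_of_le' hk
  obtain ⟨m, rfl⟩ := Nat.exists_eq_add_of_le' hm
  rw [card_append, ← Nat.card_eq_fintype_card, ← Nat.card_prod]
  have : ∀ c : G, Nat.card ↥(Dset (Fin.snoc g₁ c : Fin (k + 1 + 1) → G)) *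
      Nat.card ↥(Dset (Fin.cons c⁻¹ g₂ : Fin (m + 1 + 1) → G)) =
      Nat.card ({a : Fin (k + 1) → G // (pw g₁ a)⁻¹ * pr a = c} ×
        {b : Fin (m + 1) → G // (pr b)⁻¹ * pw g₂ b = c}) := by
    intro c
    rw [card_snoc, card_cons, Nat.card_prod]
  refine (Finset.sum_congr rfl fun c _ => this c).trans ?_
  rw [← Nat.card_sigma]
  have key : ∀ z w : (Σ c : G, {a : Fin (k + 1) → G // (pw g₁ a)⁻¹ * pr a = c} ×
        {b : Fin (m + 1) → G // (pr b)⁻¹ * pw g₂ b = c}),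
      z.2.1.1 = w.2.1.1 → z.2.2.1 = w.2.2.1 → z = w := by
    rintro ⟨_, ⟨a, rfl⟩, ⟨b, _⟩⟩ ⟨_, ⟨a', rfl⟩, ⟨b', _⟩⟩ h1 h2
    dsimp only at h1 h2
    subst h1 h2
    rfl
  refine Nat.card_congr
    { toFun := fun z => ⟨pr z.2.1.1,
        ⟨(mulLast z.2.1.1 (pr z.2.2.1)⁻¹, mulLast z.2.2.1 (pr z.2.1.1)⁻¹), ?_⟩⟩
      invFun := fun w => ⟨(pw g₁ (mulLast w.2.1.1 (pr w.2.1.2 * w.1)))⁻¹ *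
          pr (mulLast w.2.1.1 (pr w.2.1.2 * w.1)),
        ⟨mulLast w.2.1.1 (pr w.2.1.2 * w.1), rfl⟩, ⟨mulLast w.2.1.2 w.1, ?_⟩⟩
      left_inv := ?_
      right_inv := ?_ }
  · obtain ⟨c, ⟨a, ha⟩, ⟨b, hb⟩⟩ := z
    simp only [pw_mulLast, pr_mulLast]
    refine ⟨?_, by group⟩
    have h : (pr b)⁻¹ * pw g₂ b = (pw g₁ a)⁻¹ * pr a := hb.trans ha.symm
    calc _ = pw g₁ a * ((pr b)⁻¹ * pw g₂ b) * (pr a)⁻¹ := by group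
      _ = 1 := by rw [h]; group
  · obtain ⟨s, ⟨⟨a, b⟩, h1, h2⟩⟩ := w
    simp only [pw_mulLast, pr_mulLast] at *
    rw [eq_inv_of_mul_eq_one_left h1, eq_inv_of_mul_eq_one_left h2]
    group
  · rintro ⟨c, ⟨a, rfl⟩, ⟨b, hb⟩⟩
    have e1 : mulLast (mulLast a (pr b)⁻¹) (pr (mulLast b (pr a)⁻¹) * pr a) = a := by
      rw [mulLast_mulLast, pr_mulLast]; simp [mulLast_one]
    have e2 : mulLast (mulLast b (pr a)⁻¹) (pr a) = b := by
      rw [mulLast_mulLast]; simp [mulLast_one]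
    exact key _ _ e1 e2
  · rintro ⟨s, ⟨⟨a, b⟩, h1, h2⟩⟩
    simp only at h1 h2
    have e0 : pr (mulLast a (pr b * s)) = s := by
      rw [pr_mulLast, ← mul_assoc, h2, one_mul]
    have e1 : mulLast (mulLast a (pr b * s)) (pr (mulLast b s))⁻¹ = a := by
      rw [mulLast_mulLast, pr_mulLast, mul_inv_cancel, mulLast_one]
    have e2 : mulLast (mulLast b s) s⁻¹ = b := by
      rw [mulLast_mulLast, mul_inv_cancel, mulLast_one]
    simp only [e0, e1, e2]
end

section
/- Let G be a finite group and g, h, k ∈ G. Let A = {(x, y) ∈ G × G : x is conjugate to g, y is conjugate to h, and x·y is conjugate to k}. Then |C_G(g)| · |C_G(h)| · |C_G(k)| · |A| = |G| · |𝒟_{g,h,k⁻¹}|. -/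
/-- With `A = {(x,y) : x ~ g, y ~ h, x·y ~ k}`, we have
`|C_G(g)|·|C_G(h)|·|C_G(k)|·|A| = |G|·|𝒟_{g,h,k⁻¹}|`. -/
theorem stmt7 {G : Type*} [Group G] [Fintype G] (g h k : G) :
    Nat.card {x : G // x * g = g * x} * Nat.card {x : G // x * h = h * x} *
        Nat.card {x : G // x * k = k * x} *
        Nat.card {p : G × G // (∃ c : G, c * p.1 * c⁻¹ = g) ∧
          (∃ c : G, c * p.2 * c⁻¹ = h) ∧ (∃ c : G, c * (p.1 * p.2) * c⁻¹ = k)} =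
      Fintype.card G * Nat.card ↥(Dset ![g, h, k⁻¹]) := by
  classical
  have e1 : Nat.card {t : G × G × G // t.1⁻¹ * g * t.1 * (t.2.1⁻¹ * h * t.2.1) = t.2.2⁻¹ * k * t.2.2}
      = Fintype.card G * Nat.card ↥(Dset ![g, h, k⁻¹]) := by
    rw [← Nat.card_eq_fintype_card, ← Nat.card_prod]
    refine Nat.card_eq_of_bijective (fun t => (t.1.1,
      ⟨![t.1.1 * t.1.2.1⁻¹, t.1.2.1 * t.1.2.2⁻¹, t.1.2.2 * t.1.1⁻¹], ?_⟩)) ⟨?_, ?_⟩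
    · obtain ⟨⟨c, d, e⟩, ht⟩ := t
      simp only at ht
      simp only [Dset, Set.mem_ofPred_eq, List.ofFn_succ, List.ofFn_zero, List.prod_cons, List.prod_nil]
      constructor
      · have : c⁻¹ * g * c * (d⁻¹ * h * d) * (e⁻¹ * k * e)⁻¹ = 1 := by rw [ht]; group
        have h2 : c * (c⁻¹ * g * c * (d⁻¹ * h * d) * (e⁻¹ * k * e)⁻¹) * c⁻¹ = 1 := by
          rw [this]; group
        refine Eq.trans ?_ h2
        simp [mul_assoc]
      · simp [mul_assoc]
    · rintro ⟨⟨c, d, e⟩, ht⟩ ⟨⟨c', d', e'⟩, ht'⟩ hh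
      simp only [Prod.mk.injEq, Subtype.mk.injEq] at hh
      obtain ⟨rfl, hh⟩ := hh
      have h0 := congrFun hh 0
      have h2 := congrFun hh 2
      simp at h0 h2
      simp [h0, h2]
    · rintro ⟨c, a, ha⟩
      have ha' := ha
      simp only [Dset, Set.mem_ofPred_eq, List.ofFn_succ, List.ofFn_zero, List.prod_cons, List.prod_nil] at ha
      simp at ha
      obtain ⟨h1, h2⟩ := ha
      have h3 : a 1 = (a 0)⁻¹ * (a 2)⁻¹ := by
        rw [eq_inv_mul_iff_mul_eq, eq_inv_iff_mul_eq_one, mul_assoc]; exact h2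
      refine ⟨⟨(c, (a 0)⁻¹ * c, a 2 * c), ?_⟩, ?_⟩
      · simp only
        rw [h3] at h1
        have h4 : g * a 0 * h * (a 0)⁻¹ * (a 2)⁻¹ * k⁻¹ * a 2 = 1 := by
          rw [← h1]; simp [mul_assoc]
        have h5 : g * a 0 * h * (a 0)⁻¹ = (a 2)⁻¹ * k * a 2 := by
          rw [← mul_inv_eq_one, ← h4]; simp [mul_assoc]
        calc _ = c⁻¹ * (g * a 0 * h * (a 0)⁻¹) * c := by simp [mul_assoc]
          _ = _ := by rw [h5]; simp [mul_assoc]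
      · simp only [Prod.mk.injEq, Subtype.mk.injEq, true_and]
        funext i
        fin_cases i
        · simp
        · simp [h3]
        · simp
  rw [← e1, ← Nat.card_prod, ← Nat.card_prod, ← Nat.card_prod]
  have key : ∀ p : {p : G × G // (∃ c : G, c * p.1 * c⁻¹ = g) ∧
          (∃ c : G, c * p.2 * c⁻¹ = h) ∧ (∃ c : G, c * (p.1 * p.2) * c⁻¹ = k)},
      ∃ t : G × G × G, t.1 * p.1.1 * t.1⁻¹ = g ∧ t.2.1 * p.1.2 * t.2.1⁻¹ = h ∧
        t.2.2 * (p.1.1 * p.1.2) * t.2.2⁻¹ = k := by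
    rintro ⟨p, ⟨a, ha⟩, ⟨b, hb⟩, ⟨c, hc⟩⟩
    exact ⟨(a, b, c), ha, hb, hc⟩
  choose f hf1 hf2 hf3 using key
  have conj : ∀ z c x u : G, c * x * c⁻¹ = u → z * u = u * z → (z * c)⁻¹ * u * (z * c) = x := by
    intro z c x u h1 h2
    calc _ = c⁻¹ * z⁻¹ * (u * z) * c := by simp [mul_assoc]
      _ = x := by rw [← h2, ← h1]; simp [mul_assoc]
  have cent : ∀ c d x u : G, c * x * c⁻¹ = u → d⁻¹ * u * d = x → (d * c⁻¹) * u = u * (d * c⁻¹) := by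
    intro c d x u h1 h2
    have h3 : u = d * x * d⁻¹ := by rw [← h2]; simp [mul_assoc]
    calc _ = d * x * c⁻¹ := by rw [← h1]; simp [mul_assoc]
      _ = _ := by rw [h3]; simp [mul_assoc]
  refine Nat.card_eq_of_bijective (fun q => ⟨(q.1.1.1.1 * (f q.2).1, q.1.1.2.1 * (f q.2).2.1,
    q.1.2.1 * (f q.2).2.2), ?_⟩) ⟨?_, ?_⟩
  · simp only
    rw [conj _ _ _ _ (hf1 q.2) q.1.1.1.2, conj _ _ _ _ (hf2 q.2) q.1.1.2.2,
      conj _ _ _ _ (hf3 q.2) q.1.2.2]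
  · rintro ⟨⟨⟨z1, z2⟩, z3⟩, p⟩ ⟨⟨⟨w1, w2⟩, w3⟩, p'⟩ hh
    simp only [Prod.mk.injEq, Subtype.mk.injEq] at hh
    obtain ⟨h1, h2, h3⟩ := hh
    have hp : p = p' := by
      apply Subtype.ext
      apply Prod.ext
      · rw [← conj _ _ _ _ (hf1 p) z1.2, h1, conj _ _ _ _ (hf1 p') w1.2]
      · rw [← conj _ _ _ _ (hf2 p) z2.2, h2, conj _ _ _ _ (hf2 p') w2.2]
    subst hp
    have h1 := Subtype.ext (mul_right_cancel h1)
    have h2 := Subtype.ext (mul_right_cancel h2)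
    have h3 := Subtype.ext (mul_right_cancel h3)
    rw [h1, h2, h3]
  · rintro ⟨⟨c, d, e⟩, ht⟩
    simp only at ht
    let p : {p : G × G // (∃ c : G, c * p.1 * c⁻¹ = g) ∧
          (∃ c : G, c * p.2 * c⁻¹ = h) ∧ (∃ c : G, c * (p.1 * p.2) * c⁻¹ = k)} :=
      ⟨(c⁻¹ * g * c, d⁻¹ * h * d), ⟨c, by simp [mul_assoc]⟩, ⟨d, by simp [mul_assoc]⟩,
        ⟨e, by simp only [ht]; simp [mul_assoc]⟩⟩
    refine ⟨(((⟨c * (f p).1⁻¹, cent _ _ _ _ (hf1 p) rfl⟩, ⟨d * (f p).2.1⁻¹, cent _ _ _ _ (hf2 p) rfl⟩),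
      ⟨e * (f p).2.2⁻¹, cent _ _ _ _ (hf3 p) ht.symm⟩), p), ?_⟩
    simp
end

section
/- Let G be a finite group, g, h ∈ G, and z ∈ G. Then |C_G(g)| · |C_G(h)| multiplied by the number of pairs (x, y) ∈ G × G with x conjugate to g, y conjugate to h and x·y = z, equals |𝒟_{g,h,z⁻¹}|. (Equivalently, the structure constants of the products of class sums in the group algebra ℂG are γ_{i,j}^k = B̄_{i,j,k⋆}/(v_i·v_j).) -/
/-- `|C_G(g)|·|C_G(h)| · #{(x,y) : x ~ g, y ~ h, x·y = z} = |𝒟_{g,h,z⁻¹}|`. -/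
theorem stmt8 {G : Type*} [Group G] [Fintype G] (g h z : G) :
    Nat.card {x : G // x * g = g * x} * Nat.card {x : G // x * h = h * x} *
        Nat.card {p : G × G // (∃ c : G, c * p.1 * c⁻¹ = g) ∧
          (∃ c : G, c * p.2 * c⁻¹ = h) ∧ p.1 * p.2 = z} =
      Nat.card ↥(Dset ![g, h, z⁻¹]) := by
  have key : ∀ w x : G, ∃ c : G, (∃ c : G, c * x * c⁻¹ = w) → c * x * c⁻¹ = w := by
    intro w x
    by_cases hx : ∃ c : G, c * x * c⁻¹ = w
    · obtain ⟨c, hc⟩ := hx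
      exact ⟨c, fun _ => hc⟩
    · exact ⟨1, fun h' => absurd h' hx⟩
  choose k hk using key
  have conj : ∀ w x u : G, u * w = w * u → (∃ c : G, c * x * c⁻¹ = w) →
      x = (u * k w x)⁻¹ * w * (u * k w x) := by
    intro w x u hu hx
    have h1 := hk w x hx
    have h2 : u⁻¹ * w * u = w := by
      rw [mul_assoc, ← hu, inv_mul_cancel_left]
    calc x = (k w x)⁻¹ * (k w x * x * (k w x)⁻¹) * k w x := by group
      _ = (k w x)⁻¹ * (u⁻¹ * w * u) * k w x := by rw [h1, h2]
      _ = _ := by group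
  have cent : ∀ w c : G, (c * (k w (c⁻¹ * w * c))⁻¹) * w = w * (c * (k w (c⁻¹ * w * c))⁻¹) := by
    intro w c
    have h1 := hk w (c⁻¹ * w * c) ⟨c, by group⟩
    generalize k w (c⁻¹ * w * c) = m at h1
    calc c * m⁻¹ * w = c * m⁻¹ * (m * (c⁻¹ * w * c) * m⁻¹) := by rw [h1]
      _ = _ := by group
  have memD : ∀ a : Fin 3 → G, a ∈ Dset ![g, h, z⁻¹] ↔
      g * a 0 * (h * a 1) * (z⁻¹ * a 2) = 1 ∧ a 0 * a 1 * a 2 = 1 := by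
    intro a
    simp [Dset, List.ofFn_succ, mul_assoc]
  rw [← Nat.card_prod, ← Nat.card_prod]
  refine Nat.card_eq_of_bijective (fun t => ⟨![(t.1.1.1 * k g t.2.1.1) * (t.1.2.1 * k h t.2.1.2)⁻¹,
    t.1.2.1 * k h t.2.1.2, (t.1.1.1 * k g t.2.1.1)⁻¹], ?_⟩) ⟨?_, ?_⟩
  · obtain ⟨⟨⟨u, hu⟩, ⟨v, hv⟩⟩, ⟨⟨x, y⟩, hx, hy, hz⟩⟩ := t
    have e1 := conj g x u hu hx
    have e2 := conj h y v hv hy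
    rw [memD]
    dsimp at hz ⊢
    generalize u * k g x = c at *
    generalize v * k h y = d at *
    subst hz e1 e2
    constructor <;> group
  · rintro ⟨⟨⟨u, hu⟩, ⟨v, hv⟩⟩, ⟨⟨x, y⟩, hx, hy, hz⟩⟩ ⟨⟨⟨u', hu'⟩, ⟨v', hv'⟩⟩, ⟨⟨x', y'⟩, hx', hy', hz'⟩⟩ H
    have H' := congrArg Subtype.val H
    have E1 : v * k h y = v' * k h y' := congrFun H' 1
    have E2 : u * k g x = u' * k g x' := inv_injective (congrFun H' 2)
    have ex : x = x' := by
      rw [conj g x u hu hx, conj g x' u' hu' hx', E2]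
    have ey : y = y' := by
      rw [conj h y v hv hy, conj h y' v' hv' hy', E1]
    subst ex ey
    have := mul_right_cancel E1
    have := mul_right_cancel E2
    subst_vars
    rfl
  · rintro ⟨a, ha⟩
    have ha' := (memD a).1 ha
    obtain ⟨h1, h2⟩ := ha'
    have h0 : a 0 = (a 2)⁻¹ * (a 1)⁻¹ := by
      rw [← mul_inv_rev]; apply eq_inv_of_mul_eq_one_left; rw [← mul_assoc]; exact h2
    refine ⟨⟨⟨⟨_, cent g (a 2)⁻¹⟩, ⟨_, cent h (a 1)⟩⟩,
      ⟨((a 2)⁻¹⁻¹ * g * (a 2)⁻¹, (a 1)⁻¹ * h * a 1), ⟨(a 2)⁻¹, by group⟩, ⟨a 1, by group⟩, ?_⟩⟩, ?_⟩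
    · rw [h0] at h1
      dsimp only
      generalize a 1 = d at *
      generalize a 2 = c at *
      calc _ = c * (g * (c⁻¹ * d⁻¹) * (h * d) * (z⁻¹ * c)) * c⁻¹ * z := by group
        _ = z := by rw [h1]; group
    · apply Subtype.ext
      funext i
      fin_cases i
      · simp [h0]
      · simp
      · simp
end

section
/- Let G be a group, n ≥ 3, and let i be an index with 1 ≤ i ≤ n-2. Then for all g, h ∈ G, the following colored braid relation holds on Gⁿ: Ψ_i[h] ∘ Ψ_{i+1}[g] ∘ Ψ_i[g] = Ψ_{i+1}[g] ∘ Ψ_i[g] ∘ Ψ_{i+1}[h]. (In particular, for g = h, the map ψ_g : G×G → G×G, (x,y) ↦ (y·x⁻¹·g⁻¹·x, x), is a set-theoretic R-matrix satisfying the Yang–Baxter equation.) -/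
/-- `Ψ_i[g]` (0-indexed here: `i` ranges over `0,…,n-2`, corresponding to the 1-indexed
positions `i+1, i+2`): the map sending `(b₁,…,bₙ)` to the tuple whose `i`-th entry is
`b_{i+1}·b_i⁻¹·g⁻¹·b_i`, whose `(i+1)`-th entry is `b_i`, all other entries unchanged. -/
def Psi {G : Type*} [Group G] {n : ℕ} (g : G) (i : ℕ) (hi : i + 1 < n)
    (b : Fin n → G) : Fin n → G := fun j =>
  if j = (⟨i, Nat.lt_of_succ_lt hi⟩ : Fin n) then
    b ⟨i + 1, hi⟩ * (b ⟨i, Nat.lt_of_succ_lt hi⟩)⁻¹ * g⁻¹ * b ⟨i, Nat.lt_of_succ_lt hi⟩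
  else if j = (⟨i + 1, hi⟩ : Fin n) then b ⟨i, Nat.lt_of_succ_lt hi⟩
  else b j

/-- the colored braid relation
`Ψ_i[h] ∘ Ψ_{i+1}[g] ∘ Ψ_i[g] = Ψ_{i+1}[g] ∘ Ψ_i[g] ∘ Ψ_{i+1}[h]`
(with `i` 0-indexed, ranging over `0,…,n-3`). -/
theorem stmt12 {G : Type*} [Group G] {n : ℕ} (hn : 3 ≤ n) (i : ℕ)
    (hi : i + 2 < n) (g h : G) :
    Psi h i (by omega) ∘ Psi g (i + 1) hi ∘ Psi g i (by omega) =
      Psi g (i + 1) hi ∘ Psi g i (by omega) ∘ Psi h (i + 1) hi := by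
  have e1 : ¬ (i = i + 1 + 1) := by omega
  have e2 : ¬ (i + 1 + 1 = i) := by omega
  funext b j
  by_cases h0 : (j : ℕ) = i
  · simp [Psi, Fin.ext_iff, e1, e2, h0, mul_assoc]
  · by_cases h1 : (j : ℕ) = i + 1
    · simp [Psi, Fin.ext_iff, e1, e2, h1, mul_assoc]
    · by_cases h2 : (j : ℕ) = i + 2
      · simp [Psi, Fin.ext_iff, e1, e2, h2, mul_assoc]
      · simp [Psi, Fin.ext_iff, e1, e2, h0, h1, h2]
end

section
/- Let G be a group, n ≥ 3, and let u, v be indices with 2 ≤ u, v ≤ n-1 and |u - v| ≥ 2. Then for all g, k ∈ G, the maps Φ_u[k] and Φ_v[g] on Gⁿ commute: Φ_u[k] ∘ Φ_v[g] = Φ_v[g] ∘ Φ_u[k]. -/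
/-- `Φ_v[g]` (parametrized here by `t = v - 2`, the 0-based index of the leftmost modified
position; the modified positions are `t, t+1, t+2`): the map sending `(a₁,…,aₙ)` to the
tuple whose `(v-1)`-th entry is `a_{v-1}·g·a_v`, whose `v`-th entry is `a_v⁻¹·g⁻¹`, whose
`(v+1)`-th entry is `a_v·a_{v+1}`, all other entries unchanged. -/
def Phi {G : Type*} [Group G] {n : ℕ} (g : G) (t : ℕ) (ht : t + 2 < n)
    (a : Fin n → G) : Fin n → G := fun j =>
  if j = (⟨t, by omega⟩ : Fin n) then a ⟨t, by omega⟩ * g * a ⟨t + 1, by omega⟩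
  else if j = (⟨t + 1, by omega⟩ : Fin n) then (a ⟨t + 1, by omega⟩)⁻¹ * g⁻¹
  else if j = (⟨t + 2, ht⟩ : Fin n) then a ⟨t + 1, by omega⟩ * a ⟨t + 2, ht⟩
  else a j

theorem Phi_zero {G : Type*} [Group G] {n : ℕ} (g : G) (t : ℕ) (ht : t + 2 < n)
    (a : Fin n → G) (j : ℕ) (hj : j < n) (h : j = t) :
    Phi g t ht a ⟨j, hj⟩ = a ⟨t, by omega⟩ * g * a ⟨t + 1, by omega⟩ := by
  subst h; simp [Phi]

theorem Phi_one {G : Type*} [Group G] {n : ℕ} (g : G) (t : ℕ) (ht : t + 2 < n)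
    (a : Fin n → G) (j : ℕ) (hj : j < n) (h : j = t + 1) :
    Phi g t ht a ⟨j, hj⟩ = (a ⟨t + 1, by omega⟩)⁻¹ * g⁻¹ := by
  subst h; simp [Phi]

theorem Phi_two {G : Type*} [Group G] {n : ℕ} (g : G) (t : ℕ) (ht : t + 2 < n)
    (a : Fin n → G) (j : ℕ) (hj : j < n) (h : j = t + 2) :
    Phi g t ht a ⟨j, hj⟩ = a ⟨t + 1, by omega⟩ * a ⟨t + 2, ht⟩ := by
  subst h; simp [Phi]

theorem Phi_other {G : Type*} [Group G] {n : ℕ} (g : G) (t : ℕ) (ht : t + 2 < n)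
    (a : Fin n → G) (j : ℕ) (hj : j < n) (h : j < t ∨ t + 2 < j) :
    Phi g t ht a ⟨j, hj⟩ = a ⟨j, hj⟩ := by
  have h0 : j ≠ t := by omega
  have h1 : j ≠ t + 1 := by omega
  have h2 : j ≠ t + 2 := by omega
  simp [Phi, h0, h1, h2]

theorem Phi_comm_aux {G : Type*} [Group G] {n : ℕ} (t s : ℕ)
    (ht : t + 2 < n) (hs : s + 2 < n) (hts : t + 2 ≤ s) (g k : G) :
    Phi k t ht ∘ Phi g s hs = Phi g s hs ∘ Phi k t ht := by
  funext a ⟨j, hj⟩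
  simp only [Function.comp]
  -- entries read by the two maps
  have e0 := Phi_other g s hs a t (by omega) (by omega)
  have e1 := Phi_other g s hs a (t + 1) (by omega) (by omega)
  have f1 := Phi_other k t ht a (s + 1) (by omega) (by omega)
  have f2 := Phi_other k t ht a (s + 2) (by omega) (by omega)
  by_cases j0 : j = t
  · rw [Phi_zero k t ht _ j hj j0, Phi_other g s hs _ j hj (by omega),
      Phi_zero k t ht _ j hj j0, e0, e1]
  by_cases j1 : j = t + 1
  · rw [Phi_one k t ht _ j hj j1, Phi_other g s hs _ j hj (by omega),
      Phi_one k t ht _ j hj j1, e1]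
  by_cases k1 : j = s + 1
  · rw [Phi_one g s hs _ j hj k1, Phi_other k t ht _ j hj (by omega),
      Phi_one g s hs _ j hj k1, f1]
  by_cases k2 : j = s + 2
  · rw [Phi_two g s hs _ j hj k2, Phi_other k t ht _ j hj (by omega),
      Phi_two g s hs _ j hj k2, f1, f2]
  by_cases j2 : j = t + 2
  · rw [Phi_two k t ht _ j hj j2, e1]
    by_cases k0 : j = s
    · rw [Phi_zero g s hs _ j hj k0, f1, Phi_zero g s hs _ (t + 2) ht (by omega),
        Phi_two k t ht _ s (by omega) (by omega)]
      obtain rfl : s = t + 2 := by omega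
      simp only [mul_assoc]
    · rw [Phi_other g s hs _ j hj (by omega), Phi_two k t ht _ j hj j2,
        Phi_other g s hs _ (t + 2) ht (by omega)]
  rw [Phi_other k t ht _ j hj (by omega)]
  by_cases k0 : j = s
  · rw [Phi_zero g s hs _ j hj k0, Phi_zero g s hs _ j hj k0, f1,
      Phi_other k t ht _ s (by omega) (by omega)]
  · rw [Phi_other g s hs _ j hj (by omega), Phi_other g s hs _ j hj (by omega),
      Phi_other k t ht _ j hj (by omega)]

/-- if `|u - v| ≥ 2` then `Φ_u[k]` and `Φ_v[g]` commute
(here `t = u - 2` and `s = v - 2` in the 0-based indexing of `Phi`). -/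
theorem stmt14 {G : Type*} [Group G] {n : ℕ} (hn : 3 ≤ n) (t s : ℕ)
    (ht : t + 2 < n) (hs : s + 2 < n) (hts : t + 2 ≤ s ∨ s + 2 ≤ t) (g k : G) :
    Phi k t ht ∘ Phi g s hs = Phi g s hs ∘ Phi k t ht := by
  rcases hts with h | h
  · exact Phi_comm_aux t s ht hs h g k
  · exact (Phi_comm_aux s t hs ht h k g).symm
end

section
/- Let G be a group, n ≥ 4, and let v be an index with 2 ≤ v ≤ n-2. Then for all g, h ∈ G, the following braid relation holds on Gⁿ: Φ_v[h] ∘ Φ_{v+1}[g] ∘ Φ_v[g] = Φ_{v+1}[g] ∘ Φ_v[g] ∘ Φ_{v+1}[h]. -/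
/-- the braid relation
`Φ_v[h] ∘ Φ_{v+1}[g] ∘ Φ_v[g] = Φ_{v+1}[g] ∘ Φ_v[g] ∘ Φ_{v+1}[h]`
(here `t = v - 2` in the 0-based indexing of `Phi`, `t` ranging over `0,…,n-4`). -/
theorem stmt15 {G : Type*} [Group G] {n : ℕ} (hn : 4 ≤ n) (t : ℕ)
    (ht : t + 3 < n) (g h : G) :
    Phi h t (by omega) ∘ Phi g (t + 1) ht ∘ Phi g t (by omega) =
      Phi g (t + 1) ht ∘ Phi g t (by omega) ∘ Phi h (t + 1) ht := by
  funext a j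
  obtain ⟨j, hj⟩ := j
  by_cases h0 : j = t
  · subst h0
    simp [Phi, mul_assoc, Nat.add_assoc]
  by_cases h1 : j = t + 1
  · subst h1
    simp [Phi, mul_assoc, Nat.add_assoc]
  by_cases h2 : j = t + 2
  · subst h2
    simp [Phi, mul_assoc, Nat.add_assoc]
  by_cases h3 : j = t + 3
  · subst h3
    simp [Phi, mul_assoc, Nat.add_assoc]
  have h2' : ¬ j = t + 1 + 1 := h2
  have h3' : ¬ j = t + 1 + 2 := h3
  simp [Phi, h0, h1, h2, h2', h3']
end

section
/- Let G be a group, n ≥ 2, g₁,…,gₙ ∈ G, and let i be an index with 1 ≤ i ≤ n-1. Then the map Ψ_i[gᵢ] restricts to a bijection from D̄_{g₁,…,gₙ} onto D̄_{g₁,…,g_{i-1},g_{i+1},g_i,g_{i+2},…,gₙ} (the g-sequence with the i-th and (i+1)-th entries swapped). Moreover, Ψ_i[gᵢ] commutes with the diagonal right translation action of G on Gⁿ: for every (b₁,…,bₙ) ∈ Gⁿ and every g ∈ G, Ψ_i[gᵢ](b₁·g,…,bₙ·g) = (c₁·g,…,cₙ·g), where (c₁,…,cₙ) = Ψ_i[gᵢ](b₁,…,bₙ).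 -/
/-- `D̄_{g₁,…,gₙ}` : the set of tuples `(b₁,…,bₙ)` with
`(b₁⁻¹·g₁·b₁)·(b₂⁻¹·g₂·b₂)·⋯·(bₙ⁻¹·gₙ·bₙ) = 1`. -/
def Dbar {G : Type*} [Group G] {n : ℕ} (g : Fin n → G) : Set (Fin n → G) :=
  {b | (List.ofFn fun i => (b i)⁻¹ * g i * b i).prod = 1}

theorem prod_aux {G : Type*} [Group G] : ∀ (i n : ℕ) (hi : i + 1 < n) (f f' : Fin n → G)
    (_ : ∀ j : Fin n, j.1 ≠ i → j.1 ≠ i + 1 → f j = f' j)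
    (_ : f ⟨i, Nat.lt_of_succ_lt hi⟩ * f ⟨i + 1, hi⟩ =
      f' ⟨i, Nat.lt_of_succ_lt hi⟩ * f' ⟨i + 1, hi⟩),
    (List.ofFn f).prod = (List.ofFn f').prod := by
  intro i
  induction i with
  | zero =>
    intro n hi f f' h1 h2
    obtain ⟨m, rfl⟩ : ∃ m, n = m + 2 := ⟨n - 2, by omega⟩
    simp only [List.ofFn_succ, List.prod_cons, ← mul_assoc]
    have h3 : (fun i : Fin m => f i.succ.succ) = fun i : Fin m => f' i.succ.succ := by
      funext j
      apply h1 <;> simp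
    rw [h3]
    congr 1
  | succ i ih =>
    intro n hi f f' h1 h2
    obtain ⟨m, rfl⟩ : ∃ m, n = m + 1 := ⟨n - 1, by omega⟩
    simp only [List.ofFn_succ, List.prod_cons]
    rw [h1 0 (by simp) (by simp)]
    congr 1
    apply ih m (by omega)
    · intro j hj hj'
      apply h1
      · simpa using hj
      · simpa using hj'
    · exact h2

/-- `Ψ_i[gᵢ]` restricts to a bijection from `D̄_{g₁,…,gₙ}` onto
`D̄` of the sequence with the `i`-th and `(i+1)`-th colors swapped, and it commutes
with the diagonal right translation action of `G` on `Gⁿ`. -/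
theorem stmt16 {G : Type*} [Group G] {n : ℕ} (hn : 2 ≤ n) (g : Fin n → G)
    (i : ℕ) (hi : i + 1 < n) :
    Set.BijOn (Psi (g ⟨i, Nat.lt_of_succ_lt hi⟩) i hi) (Dbar g)
      (Dbar (fun j => g (Equiv.swap (⟨i, Nat.lt_of_succ_lt hi⟩ : Fin n) ⟨i + 1, hi⟩ j))) ∧
    ∀ (b : Fin n → G) (x : G),
      Psi (g ⟨i, Nat.lt_of_succ_lt hi⟩) i hi (fun j => b j * x) =
        fun j => Psi (g ⟨i, Nat.lt_of_succ_lt hi⟩) i hi b j * x := by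
  have hne : (⟨i + 1, hi⟩ : Fin n) ≠ ⟨i, Nat.lt_of_succ_lt hi⟩ := by simp
  have key : ∀ b : Fin n → G, Psi (g ⟨i, Nat.lt_of_succ_lt hi⟩) i hi b ∈
      Dbar (fun j => g (Equiv.swap (⟨i, Nat.lt_of_succ_lt hi⟩ : Fin n) ⟨i + 1, hi⟩ j)) ↔
      b ∈ Dbar g := by
    intro b
    simp only [Dbar, Set.mem_setOf_eq]
    rw [prod_aux i n hi _ (fun j => (b j)⁻¹ * g j * b j)]
    · intro j h1 h2
      have h1' : j ≠ ⟨i, Nat.lt_of_succ_lt hi⟩ := fun h => h1 (by rw [h])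
      have h2' : j ≠ ⟨i + 1, hi⟩ := fun h => h2 (by rw [h])
      simp only [Psi, if_neg h1', if_neg h2', Equiv.swap_apply_of_ne_of_ne h1' h2']
    · simp only [Psi, if_neg hne, if_true, Equiv.swap_apply_left, Equiv.swap_apply_right]
      group
  refine ⟨⟨fun b hb => (key b).2 hb, ?_, ?_⟩, ?_⟩
  · intro b _ c _ h
    have h0 := congrFun h ⟨i, Nat.lt_of_succ_lt hi⟩
    have h1 := congrFun h ⟨i + 1, hi⟩
    simp only [Psi, if_neg hne, if_true] at h0 h1
    rw [h1] at h0
    simp only [mul_left_inj] at h0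
    funext j
    by_cases hj : j = ⟨i, Nat.lt_of_succ_lt hi⟩
    · rw [hj, h1]
    by_cases hj' : j = ⟨i + 1, hi⟩
    · rw [hj', h0]
    simpa only [Psi, if_neg hj, if_neg hj'] using congrFun h j
  · intro c hc
    have hs : Psi (g ⟨i, Nat.lt_of_succ_lt hi⟩) i hi (fun j =>
        if j = (⟨i, Nat.lt_of_succ_lt hi⟩ : Fin n) then c ⟨i + 1, hi⟩
        else if j = (⟨i + 1, hi⟩ : Fin n) then
          c ⟨i, Nat.lt_of_succ_lt hi⟩ * (c ⟨i + 1, hi⟩)⁻¹ * g ⟨i, Nat.lt_of_succ_lt hi⟩ *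
            c ⟨i + 1, hi⟩
        else c j) = c := by
      funext j
      by_cases hj : j = ⟨i, Nat.lt_of_succ_lt hi⟩
      · subst hj
        simp only [Psi, if_neg hne, if_true]
        group
      by_cases hj' : j = ⟨i + 1, hi⟩
      · subst hj'
        simp only [Psi, if_neg hne, if_true]
      simp only [Psi, if_neg hj, if_neg hj']
    refine ⟨_, (key _).1 ?_, hs⟩
    rw [hs]
    exact hc
  · intro b x
    funext j
    simp only [Psi]
    split_ifs
    · group
    · rfl
    · rfl
end

section
/- Let G be a group, n ≥ 2, and g₁,…,gₙ ∈ G. Let H : Gⁿ → Gⁿ be the map (b₁,…,bₙ) ↦ (b₁·b₂⁻¹, b₂·b₃⁻¹, …, b_{n-1}·bₙ⁻¹, bₙ·b₁⁻¹). Then: (i) H maps D̄_{g₁,…,gₙ} into 𝒟_{g₁,…,gₙ}; (ii) every element of 𝒟_{g₁,…,gₙ} is of the form H(b) for some b ∈ D̄_{g₁,…,gₙ}; (iii) for b, d ∈ D̄_{g₁,…,gₙ}, H(b) = H(d) if and only if there exists g ∈ G with dᵢ = bᵢ·g for all 1 ≤ i ≤ n. In particular H induces a bijection from the quotient of D̄_{g₁,…,gₙ}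 by the diagonal right G-action onto 𝒟_{g₁,…,gₙ}. -/
/-- The map `H : (b₁,…,bₙ) ↦ (b₁·b₂⁻¹, b₂·b₃⁻¹, …, b_{n-1}·bₙ⁻¹, bₙ·b₁⁻¹)`
(indices taken cyclically). -/
def Hmap {G : Type*} [Group G] {n : ℕ} [NeZero n] (b : Fin n → G) : Fin n → G :=
  fun j => b j * (b (j + 1))⁻¹

theorem tele_aux {G : Type*} [Group G] (n : ℕ) : ∀ (c : ℕ → G) (u : Fin n → G),
    (List.ofFn fun i : Fin n => (c i)⁻¹ * u i * c (i + 1)).prod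
      = (c 0)⁻¹ * (List.ofFn u).prod * c n := by
  induction n with
  | zero => intro c u; simp
  | succ n ih =>
    intro c u
    rw [List.ofFn_succ, List.ofFn_succ, List.prod_cons, List.prod_cons]
    have := ih (fun k => c (k + 1)) (fun i => u i.succ)
    simp only [Fin.val_succ, Fin.val_zero] at this ⊢
    rw [this]
    group

theorem ofNat_succ_aux {n : ℕ} [NeZero n] (i : Fin n) :
    Fin.ofNat n (i.val + 1) = i + 1 := by
  apply Fin.ext
  simp [Fin.ofNat, Fin.val_add]

theorem tele_cyc {G : Type*} [Group G] {n : ℕ} [NeZero n] (b u : Fin n → G) :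
    (List.ofFn fun i : Fin n => (b i)⁻¹ * u i * b (i + 1)).prod
      = (b 0)⁻¹ * (List.ofFn u).prod * b 0 := by
  have h := tele_aux n (fun k => b (Fin.ofNat n k)) u
  have h0 : Fin.ofNat n 0 = 0 := by apply Fin.ext; simp [Fin.ofNat]
  have hn : Fin.ofNat n n = 0 := by apply Fin.ext; simp [Fin.ofNat]
  have hi : ∀ i : Fin n, Fin.ofNat n i.val = i := by
    intro i; apply Fin.ext; simp [Fin.ofNat, Nat.mod_eq_of_lt i.isLt]
  simp only [ofNat_succ_aux, h0, hn, hi] at h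
  exact h

theorem conj_one_aux {G : Type*} [Group G] (x y : G) : x⁻¹ * y * x = 1 ↔ y = 1 := by
  constructor
  · intro h
    have : y = x * (x⁻¹ * y * x) * x⁻¹ := by group
    rw [this, h]; group
  · rintro rfl; group

theorem prod_H_aux {G : Type*} [Group G] {n : ℕ} [NeZero n] (b : Fin n → G) :
    (List.ofFn (Hmap b)).prod = 1 := by
  have h := tele_cyc b (Hmap b)
  have e : (fun i : Fin n => (b i)⁻¹ * Hmap b i * b (i + 1)) = fun _ => 1 := by
    funext i; simp [Hmap]
  rw [e] at h
  rw [← conj_one_aux (b 0), ← h]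
  simp

theorem mem_iff_aux {G : Type*} [Group G] {n : ℕ} [NeZero n] (g b : Fin n → G) :
    b ∈ Dbar g ↔ Hmap b ∈ Dset g := by
  have h := tele_cyc b (fun i => g i * Hmap b i)
  have e : (fun i : Fin n => (b i)⁻¹ * (g i * Hmap b i) * b (i + 1))
      = fun i => (b i)⁻¹ * g i * b i := by
    funext i; simp [Hmap, mul_assoc]
  rw [e] at h
  simp only [Dbar, Dset, Set.mem_setOf_eq, prod_H_aux, and_true]
  rw [h, conj_one_aux]

theorem surj_aux {G : Type*} [Group G] {n : ℕ} [NeZero n] (a : Fin n → G)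
    (ha : (List.ofFn a).prod = 1) : ∃ b : Fin n → G, Hmap b = a := by
  refine ⟨fun j => (((List.ofFn a).take j.val).prod)⁻¹, ?_⟩
  funext j
  have hs : ((List.ofFn a).take (j.val + 1)).prod = ((List.ofFn a).take j.val).prod * a j := by
    rw [List.prod_take_succ _ _ (by simp)]
    simp
  have hw : ((List.ofFn a).take (j + 1 : Fin n).val).prod
      = ((List.ofFn a).take (j.val + 1)).prod := by
    rw [← ofNat_succ_aux]
    simp only [Fin.ofNat]
    rcases Nat.lt_or_ge (j.val + 1) n with h | h
    · rw [Nat.mod_eq_of_lt h]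
    · have : j.val + 1 = n := by omega
      rw [this, Nat.mod_self, List.take_zero, List.prod_nil,
        List.take_of_length_le (i := n) (by simp), ha]
  simp only [Hmap]
  rw [hw, hs]
  group

theorem inj_aux {G : Type*} [Group G] {n : ℕ} [NeZero n] (b d : Fin n → G)
    (h : Hmap b = Hmap d) (k : ℕ) :
    ∀ hk : k < n, d ⟨k, hk⟩ = b ⟨k, hk⟩ * ((b 0)⁻¹ * d 0) := by
  induction k with
  | zero =>
    intro hk
    have : (⟨0, hk⟩ : Fin n) = 0 := by apply Fin.ext; simp
    rw [this]; group
  | succ k ih =>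
    intro hk
    have hk' : k < n := by omega
    have e := congrFun h ⟨k, hk'⟩
    have e1 : (⟨k, hk'⟩ : Fin n) + 1 = ⟨k + 1, hk⟩ := by
      rw [← ofNat_succ_aux]
      apply Fin.ext
      simp [Fin.ofNat, Nat.mod_eq_of_lt hk]
    simp only [Hmap, e1] at e
    rw [ih hk', mul_assoc, mul_right_inj, eq_mul_inv_iff_mul_eq, inv_mul_eq_iff_eq_mul] at e
    exact e

/-- (i) `H` maps `D̄_{g₁,…,gₙ}` into `𝒟_{g₁,…,gₙ}`; (ii) every element of
`𝒟_{g₁,…,gₙ}` is `H(b)` for some `b ∈ D̄_{g₁,…,gₙ}`; (iii) for `b, d ∈ D̄_{g₁,…,gₙ}`,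
`H(b) = H(d)` iff `d` is a diagonal right translate of `b`. -/
theorem stmt17 {G : Type*} [Group G] {n : ℕ} [NeZero n] (hn : 2 ≤ n)
    (g : Fin n → G) :
    Set.MapsTo Hmap (Dbar g) (Dset g) ∧
    (∀ a ∈ Dset g, ∃ b ∈ Dbar g, Hmap b = a) ∧
    (∀ b ∈ Dbar g, ∀ d ∈ Dbar g,
      (Hmap b = Hmap d ↔ ∃ x : G, ∀ i : Fin n, d i = b i * x)) := by
  refine ⟨fun b hb => (mem_iff_aux g b).1 hb, ?_, ?_⟩
  · intro a ha
    obtain ⟨b, rfl⟩ := surj_aux a ha.2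
    exact ⟨b, (mem_iff_aux g b).2 ha, rfl⟩
  · intro b _ d _
    constructor
    · intro h
      exact ⟨(b 0)⁻¹ * d 0, fun i => inj_aux b d h i.val i.isLt⟩
    · rintro ⟨x, hx⟩
      funext i
      simp only [Hmap, hx]
      group
end

section
/- Let G be a group, n ≥ 3, let i be an index with 2 ≤ i ≤ n-1, and let g ∈ G. Let H : Gⁿ → Gⁿ be the map (b₁,…,bₙ) ↦ (b₁·b₂⁻¹, b₂·b₃⁻¹, …, b_{n-1}·bₙ⁻¹, bₙ·b₁⁻¹). Then H intertwines the two braid group actions: for every (b₁,…,bₙ) ∈ Gⁿ, Φ_i[g](H(b₁,…,bₙ)) = H(Ψ_i[g](b₁,…,bₙ)). -/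
/-- `H` intertwines the two braid group actions:
`Φ_i[g](H(b)) = H(Ψ_i[g](b))` for `2 ≤ i ≤ n-1` (1-indexed). Here `p = i - 1` is the
0-based index for `Psi` (so `1 ≤ p ≤ n-2`) and `p - 1 = i - 2` is the 0-based parameter
for `Phi`. -/
theorem stmt18 {G : Type*} [Group G] {n : ℕ} [NeZero n] (hn : 3 ≤ n)
    (p : ℕ) (hp1 : 1 ≤ p) (hp : p + 1 < n) (g : G) (b : Fin n → G) :
    Phi g (p - 1) (by omega) (Hmap b) = Hmap (Psi g p hp b) := by
  obtain ⟨t, rfl⟩ : ∃ t, p = t + 1 := ⟨p - 1, by omega⟩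
  have hs : ∀ (k : ℕ) (hk : k + 1 < n), (⟨k, by omega⟩ : Fin n) + 1 = ⟨k + 1, hk⟩ := by
    intro k hk
    apply Fin.ext
    rw [Fin.val_add, Fin.val_one', Nat.mod_eq_of_lt (show 1 < n by omega)]
    exact Nat.mod_eq_of_lt hk
  have hval : ∀ j : Fin n, (j + 1).val = if j.val + 1 = n then 0 else j.val + 1 := by
    intro j
    rw [Fin.val_add, Fin.val_one', Nat.mod_eq_of_lt (show 1 < n by omega)]
    split_ifs with h
    · rw [h, Nat.mod_self]
    · exact Nat.mod_eq_of_lt (by omega)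
  have l0 : t < n := by omega
  have l1 : t + 1 < n := by omega
  have l2 : t + 2 < n := by omega
  funext j
  have hj := j.isLt
  have hv := hval j
  simp only [Phi, Psi, Hmap, Nat.add_sub_cancel]
  by_cases h0 : j.val = t
  · obtain rfl : j = ⟨t, l0⟩ := Fin.ext h0
    simp [hs t (by omega), hs (t + 1) (by omega), mul_assoc]
    intro h
    omega
  by_cases h1 : j.val = t + 1
  · obtain rfl : j = ⟨t + 1, l1⟩ := Fin.ext h1
    simp [hs (t + 1) (by omega), mul_assoc]
  by_cases h2 : j.val = t + 2
  · obtain rfl : j = ⟨t + 2, l2⟩ := Fin.ext h2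
    have e1 : ¬ ((⟨t + 2, l2⟩ : Fin n) + 1).val = t + 1 := by
      rw [hv]; split_ifs <;> simp
    have e2 : ¬ ((⟨t + 2, l2⟩ : Fin n) + 1).val = t + 1 + 1 := by
      rw [hv]; split_ifs <;> simp
    simp only [Fin.ext_iff, e1, e2, if_false]
    simp [hs (t + 1) (by omega), mul_assoc]
  · have e1 : ¬ (j + 1).val = t + 1 := by
      split_ifs at hv <;> omega
    have e2 : ¬ (j + 1).val = t + 1 + 1 := by
      split_ifs at hv <;> omega
    simp only [Fin.ext_iff, e1, e2, h0, h1, h2, if_false]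
end

section
/- Let G be a group, n ≥ 2, g₁,…,gₙ ∈ G, h ∈ G, and for 1 ≤ j ≤ n let H_{j;h} : Gⁿ → Gⁿ be the map multiplying the j-th coordinate on the left by h and leaving the other coordinates unchanged. Then: (i) for every 1 ≤ j ≤ n, H_{j;h} maps D̄_{g₁,…,gₙ} bijectively onto D̄_{g₁,…,g_{j-1},h·g_j·h⁻¹,g_{j+1},…,gₙ}; and (ii) for every index 1 ≤ i ≤ n-1 and every (b₁,…,bₙ) ∈ Gⁿ, H_{i+1;h}(Ψ_i[gᵢ](b₁,…,bₙ)) = Ψ_i[h·gᵢ·h⁻¹](H_{i;h}(b₁,…,bₙ)). -/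
/-- `H_{j;h}` : multiply the `j`-th coordinate on the left by `h`, leaving the other
coordinates unchanged. -/
def Hm {G : Type*} [Group G] {n : ℕ} (h : G) (j : Fin n) (b : Fin n → G) : Fin n → G :=
  Function.update b j (h * b j)

/-- (i) `H_{j;h}` maps `D̄_{g₁,…,gₙ}` bijectively onto
`D̄_{g₁,…,h·g_j·h⁻¹,…,gₙ}`; (ii) `H_{i+1;h} ∘ Ψ_i[gᵢ] = Ψ_i[h·gᵢ·h⁻¹] ∘ H_{i;h}`
(indices for `Psi` are 0-based: `p = i - 1`). -/
theorem stmt19 {G : Type*} [Group G] {n : ℕ} (hn : 2 ≤ n) (g : Fin n → G) (h : G) :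
    (∀ j : Fin n,
      Set.BijOn (Hm h j) (Dbar g) (Dbar (Function.update g j (h * g j * h⁻¹)))) ∧
    (∀ (p : ℕ) (hp : p + 1 < n) (b : Fin n → G),
      Hm h ⟨p + 1, hp⟩ (Psi (g ⟨p, Nat.lt_of_succ_lt hp⟩) p hp b) =
        Psi (h * g ⟨p, Nat.lt_of_succ_lt hp⟩ * h⁻¹) p hp
          (Hm h ⟨p, Nat.lt_of_succ_lt hp⟩ b)) := by
  have key : ∀ (j : Fin n) (b : Fin n → G),
      Hm h j b ∈ Dbar (Function.update g j (h * g j * h⁻¹)) ↔ b ∈ Dbar g := by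
    intro j b
    have e : (fun i => (Hm h j b i)⁻¹ * (Function.update g j (h * g j * h⁻¹)) i * Hm h j b i)
        = fun i => (b i)⁻¹ * g i * b i := by
      funext i
      by_cases hij : i = j
      · subst hij
        simp only [Hm, Function.update_self]
        group
      · simp only [Hm, Function.update_of_ne hij]
    simp only [Dbar, Set.mem_setOf_eq]
    rw [e]
  refine ⟨fun j => ⟨fun b hb => (key j b).2 hb, ?_, ?_⟩, ?_⟩
  · intro b _ c _ hbc
    funext i
    have hi := congrFun hbc i
    by_cases hij : i = j
    · subst hij
      simpa [Hm] using hi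
    · simpa [Hm, hij] using hi
  · intro c hc
    have e : Hm h j (Hm h⁻¹ j c) = c := by
      simp [Hm]
    exact ⟨Hm h⁻¹ j c, (key j _).1 (by rw [e]; exact hc), e⟩
  · intro p hp b
    funext j
    by_cases h1 : j = ⟨p, Nat.lt_of_succ_lt hp⟩
    · subst h1
      simp [Hm, Psi, Function.update_apply, mul_assoc]
    · by_cases h2 : j = ⟨p + 1, hp⟩
      · subst h2
        simp [Hm, Psi]
      · simp [Hm, Psi, h1, h2]
end
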